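/- arXiv:2304.11211 — 7 statements merged into one kernel-verified Lean document; each statement's English description precedes it below -/
import Mathlib

section
/- Let L = (L₁, …, L_r) be a frame for E and let v be a valuation on E. Then v is adapted to L (i.e., every subspace E_{v≥a}, a ∈ ℝ, is a sum of some of the L_i) if and only if for every e ∈ E, writing e = Σᵢ e_i with e_i ∈ L_i, one has v(e) = min{v(e_i) : i = 1, …, r} (equivalently, v(e) = min{v(e_i) : e_i ≠ 0} for e ≠ 0). -/
/-- A valuation on a `K`-vector space `E` with values in `ℝ ∪ {∞}`. -/
def IsVSValuation (K : Type*) {E : Type*} [Field K] [AddCommGroup E] [Module K E]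
    (v : E → WithTop ℝ) : Prop :=
  (∀ (c : K) (e : E), c ≠ 0 → v (c • e) = v e) ∧
  (∀ e₁ e₂ : E, min (v e₁) (v e₂) ≤ v (e₁ + e₂)) ∧
  (∀ e : E, v e = ⊤ ↔ e = 0)

/-- A frame for `E`: a family of one-dimensional subspaces whose internal direct sum is `E`. -/
def IsFrame (K : Type*) {E : Type*} [Field K] [AddCommGroup E] [Module K E]
    {r : ℕ} (L : Fin r → Submodule K E) : Prop :=
  (∀ i, Module.finrank K (L i) = 1) ∧ iSupIndep L ∧ (⨆ i, L i) = ⊤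

/-- A valuation `v` is adapted to a frame `L` if every subspace `E_{v ≥ t}`, `t ∈ ℝ`,
is a sum of some of the `L i`. -/
def IsAdapted {K E : Type*} [Field K] [AddCommGroup E] [Module K E]
    {r : ℕ} (v : E → WithTop ℝ) (L : Fin r → Submodule K E) : Prop :=
  ∀ t : ℝ, ∃ s : Finset (Fin r),
    {e : E | (t : WithTop ℝ) ≤ v e} = ((⨆ i ∈ s, L i : Submodule K E) : Set E)

/-- A valuation `v` on `E` is adapted to a frame `L = (L₁, …, L_r)` if and only if for every
`e = Σᵢ eᵢ` with `eᵢ ∈ Lᵢ` one has `v e = min {v eᵢ : i = 1, …, r}`. -/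
theorem stmt4 (K E : Type*) [Field K] [AddCommGroup E] [Module K E] [FiniteDimensional K E]
    (r : ℕ) (hr : Module.finrank K E = r)
    (L : Fin r → Submodule K E) (hL : IsFrame K L)
    (v : E → WithTop ℝ) (hv : IsVSValuation K v) :
    IsAdapted v L ↔
      ∀ c : Fin r → E, (∀ i, c i ∈ L i) →
        v (∑ i, c i) = Finset.univ.inf fun i => v (c i) := by
  classical
  obtain ⟨hsm, hadd, htop⟩ := hv
  obtain ⟨hone, hind, hsup⟩ := hL
  have h0 : v 0 = ⊤ := (htop 0).2 rfl
  constructor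
  · intro had c hc
    apply le_antisymm
    · apply Finset.le_inf
      intro i _
      have key : ∀ t : ℝ, (t : WithTop ℝ) ≤ v (∑ i, c i) → (t : WithTop ℝ) ≤ v (c i) := by
        intro t ht
        obtain ⟨s, hs⟩ := had t
        have hx : (∑ i, c i) ∈ (⨆ i ∈ s, L i : Submodule K E) := by
          rw [← SetLike.mem_coe, ← hs]; exact ht
        by_cases his : i ∈ s
        · have h1 : c i ∈ (⨆ i ∈ s, L i : Submodule K E) :=
            (le_iSup₂_of_le (f := fun i (_ : i ∈ s) => L i) i his le_rfl) (hc i)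
          rw [← SetLike.mem_coe, ← hs] at h1
          exact h1
        · have hle : (⨆ i ∈ s, L i : Submodule K E) ≤ ⨆ j, ⨆ (_ : j ≠ i), L j := by
            refine iSup₂_le fun j hj => ?_
            have hji : j ≠ i := by rintro rfl; exact his hj
            exact le_iSup₂_of_le (f := fun j (_ : j ≠ i) => L j) j hji le_rfl
          have h2 : (∑ j ∈ Finset.univ.erase i, c j) ∈ ⨆ j, ⨆ (_ : j ≠ i), L j := by
            refine Submodule.sum_mem _ fun j hj => ?_
            exact (le_iSup₂_of_le (f := fun j (_ : j ≠ i) => L j) j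
              (Finset.ne_of_mem_erase hj) le_rfl) (hc j)
          have h3 : c i ∈ ⨆ j, ⨆ (_ : j ≠ i), L j := by
            have h4 := Submodule.sub_mem _ (hle hx) h2
            rwa [← Finset.add_sum_erase _ _ (Finset.mem_univ i), add_sub_cancel_right] at h4
          have h5 : c i = 0 := Submodule.disjoint_def.1 (hind i) _ (hc i) h3
          rw [h5, h0]; exact le_top
      by_contra hlt
      push Not at hlt
      obtain ⟨a, ha⟩ := WithTop.ne_top_iff_exists.1 (ne_top_of_lt hlt)
      rw [← ha] at hlt key
      by_cases hT : v (∑ i, c i) = ⊤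
      · have := key (a + 1) (by rw [hT]; exact le_top)
        rw [WithTop.coe_le_coe] at this
        linarith
      · obtain ⟨b, hb⟩ := WithTop.ne_top_iff_exists.1 hT
        rw [← hb] at hlt
        have := key b hb.le
        exact absurd this (not_le.2 hlt)
    · have : ∀ s : Finset (Fin r), (s.inf fun i => v (c i)) ≤ v (∑ i ∈ s, c i) := by
        intro s
        induction s using Finset.induction_on with
        | empty => simp [h0]
        | insert a s ha ih =>
          rw [Finset.inf_insert, Finset.sum_insert ha]
          exact le_trans (inf_le_inf_left _ ih) (hadd _ _)
      exact this _
  · intro h t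
    let F : Submodule K E :=
      { carrier := {e : E | (t : WithTop ℝ) ≤ v e}
        add_mem' := fun {a b} ha hb => le_trans (le_min ha hb) (hadd a b)
        zero_mem' := by
          change (t : WithTop ℝ) ≤ v 0
          rw [h0]; exact le_top
        smul_mem' := fun c x hx => by
          change (t : WithTop ℝ) ≤ v (c • x)
          by_cases hc : c = 0
          · rw [hc, zero_smul, h0]; exact le_top
          · rw [hsm c x hc]; exact hx }
    refine ⟨Finset.univ.filter fun i => L i ≤ F, ?_⟩
    change (F : Set E) = _
    congr 1
    apply le_antisymm
    · intro e he
      have hmem : e ∈ ⨆ i ∈ (Finset.univ : Finset (Fin r)), L i := by simp [hsup]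
      obtain ⟨μ, rfl⟩ := (Submodule.mem_iSup_finset_iff_exists_sum L e).1 hmem
      have hv' := h (fun i => (μ i : E)) fun i => (μ i).2
      refine Submodule.sum_mem _ fun i _ => ?_
      by_cases hz : μ i = 0
      · rw [hz]; exact Submodule.zero_mem _
      have hi : (μ i : E) ∈ F := by
        change (t : WithTop ℝ) ≤ _
        refine le_trans (show (t : WithTop ℝ) ≤ v _ from he) ?_
        rw [hv']
        exact Finset.inf_le (f := fun i => v (μ i : E)) (Finset.mem_univ i)
      have hLF : L i ≤ F := by
        intro w hw
        obtain ⟨k, hk⟩ := (finrank_eq_one_iff_of_nonzero' (μ i) hz).1 (hone i) ⟨w, hw⟩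
        have : w = k • (μ i : E) := by
          have := congrArg Subtype.val hk
          exact this.symm
        rw [this]
        exact F.smul_mem k hi
      exact (le_iSup₂_of_le (f := fun i (_ : i ∈ Finset.univ.filter fun i => L i ≤ F) => L i) i
        (by simp [hLF]) le_rfl) (μ i).2
    · exact iSup₂_le fun i hi => (Finset.mem_filter.1 hi).2
end

section
/- Given any two flags of subspaces in E, there exists a frame for E such that both flags are adapted to it; that is, for flags {0} ⊊ F₁ ⊊ ⋯ ⊊ F_k = E and {0} ⊊ F'₁ ⊊ ⋯ ⊊ F'_m = E there is a family L = (L₁, …, L_r) of 1-dimensional subspaces with E = ⊕ᵢ L_i such that every F_j and every F'_j is a sum of some of the L_i. -/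
theorem aux_step {K E : Type*} [Field K] [AddCommGroup E] [Module K E]
    {H W X : Submodule K E} {B : Set E} {v : E} (hHW : H ⋖ W) (hvW : v ∈ W) (hvH : v ∉ H)
    (hX : X ⊓ H ≤ Submodule.span K (B ∩ X)) (h : X ⊓ W ≤ H ∨ v ∈ X) :
    X ⊓ W ≤ Submodule.span K (insert v B ∩ X) := by
  have hmono : Submodule.span K (B ∩ X) ≤ Submodule.span K (insert v B ∩ X) :=
    Submodule.span_mono (Set.inter_subset_inter_left _ (Set.subset_insert _ _))
  rcases h with h | h
  · exact (le_inf inf_le_left h).trans (hX.trans hmono)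
  · rintro x ⟨hxX, hxW⟩
    have hW : H ⊔ Submodule.span K {v} = W := by
      have h1 : H ⊔ Submodule.span K {v} ≤ W :=
        sup_le hHW.le (by rw [Submodule.span_singleton_le_iff_mem]; exact hvW)
      rcases hHW.eq_or_eq le_sup_left h1 with h2 | h2
      · exact absurd (h2 ▸ (le_sup_right : _ ≤ H ⊔ Submodule.span K {v})
          (Submodule.mem_span_singleton_self v)) hvH
      · exact h2
    rw [← hW] at hxW
    obtain ⟨y, hy, z, hz, rfl⟩ := Submodule.mem_sup.1 hxW
    obtain ⟨c, rfl⟩ := Submodule.mem_span_singleton.1 hz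
    have hyX : y ∈ X := by
      have := X.sub_mem hxX (X.smul_mem c h)
      simpa using this
    refine Submodule.add_mem _ (hmono (hX ⟨hyX, hy⟩)) (Submodule.smul_mem _ _ ?_)
    exact Submodule.subset_span ⟨Set.mem_insert _ _, h⟩

theorem aux_hyper {K E : Type*} [Field K] [AddCommGroup E] [Module K E] [FiniteDimensional K E]
    {m : ℕ} (F : Fin m → Submodule K E) (hF : Monotone F) {A W : Submodule K E} (hA : A < W) :
    ∃ U, A ≤ U ∧ U < W ∧ ∀ k, A ⊔ F k ⊓ W < W → F k ⊓ W ≤ U := by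
  obtain ⟨U, hU, hmax⟩ := WellFounded.has_min (wellFounded_gt (α := Submodule K E))
    {X | X < W ∧ (X = A ∨ ∃ k, X = A ⊔ F k ⊓ W)} ⟨A, hA, Or.inl rfl⟩
  obtain ⟨hUW, hU⟩ := hU
  have hAU : A ≤ U := by
    rcases hU with rfl | ⟨k, rfl⟩
    · exact le_rfl
    · exact le_sup_left
  refine ⟨U, hAU, hUW, fun k hk => ?_⟩
  have h1 : ¬ U < A ⊔ F k ⊓ W := hmax _ ⟨hk, Or.inr ⟨k, rfl⟩⟩
  rcases hU with rfl | ⟨l, rfl⟩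
  · by_contra h
    exact h1 (lt_of_le_of_ne le_sup_left fun e => h (by rw [e]; exact le_sup_right))
  · rcases le_total k l with h | h
    · exact (inf_le_inf_right _ (hF h)).trans le_sup_right
    · have h2 : A ⊔ F l ⊓ W ≤ A ⊔ F k ⊓ W := sup_le_sup_left (inf_le_inf_right _ (hF h)) _
      rw [h2.eq_of_not_lt h1]
      exact le_sup_right

theorem aux_main {K E : Type*} [Field K] [AddCommGroup E] [Module K E] [FiniteDimensional K E]
    {m m' : ℕ} (F : Fin m → Submodule K E) (F' : Fin m' → Submodule K E)
    (hF : Monotone F) (hF' : Monotone F') (hT : ∃ k, F' k = ⊤) (W : Submodule K E) :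
    ∃ B : Set E, B ⊆ W ∧ LinearIndepOn K id B ∧
      (∀ k, F k ⊓ W ≤ Submodule.span K (B ∩ F k)) ∧
      (∀ k, F' k ⊓ W ≤ Submodule.span K (B ∩ F' k)) := by
  induction W using WellFoundedLT.induction with
  | ind W ih =>
  rcases eq_or_ne W ⊥ with rfl | hW
  · exact ⟨∅, by simp, linearIndepOn_empty _ _, by simp, by simp⟩
  obtain ⟨U, -, hUW, hU⟩ := aux_hyper F hF (bot_lt_iff_ne_bot.2 hW)
  obtain ⟨H, hUH, hHW⟩ := exists_le_covBy_of_lt hUW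
  obtain ⟨k0, hk0⟩ := hT
  obtain ⟨k, hk, hmin⟩ := WellFounded.has_min (wellFounded_lt (α := Fin m'))
    {k | ¬ F' k ⊓ W ≤ H} ⟨k0, by simpa [hk0] using hHW.lt.not_ge⟩
  obtain ⟨v, ⟨hvF, hvW⟩, hvH⟩ := SetLike.not_le_iff_exists.1 hk
  obtain ⟨B, hBH, hB, h1, h2⟩ := ih H hHW.lt
  refine ⟨insert v B, Set.insert_subset hvW (hBH.trans hHW.le),
    hB.id_insert fun h => hvH (Submodule.span_le.2 hBH h), fun l => ?_, fun l => ?_⟩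
  · refine aux_step hHW hvW hvH (h1 l) ?_
    by_cases h : F l ⊓ W < W
    · exact Or.inl ((hU l (by simpa using h)).trans hUH)
    · exact Or.inr (inf_eq_right.1 (inf_le_right.eq_of_not_lt h) hvW)
  · refine aux_step hHW hvW hvH (h2 l) ?_
    by_cases h : F' l ⊓ W ≤ H
    · exact Or.inl h
    · exact Or.inr (hF' (not_lt.1 (hmin l h)) hvF)

theorem aux_adapt {K E ι : Type*} [Field K] [AddCommGroup E] [Module K E] [Fintype ι]
    {B : Set E} (e : ι ≃ B) (X : Submodule K E) (h : X ⊓ ⊤ ≤ Submodule.span K (B ∩ X)) :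
    ∃ s : Finset ι, X = ⨆ i ∈ s, Submodule.span K {(e i : E)} := by
  classical
  refine ⟨Finset.univ.filter fun i => (e i : E) ∈ X, le_antisymm ?_ ?_⟩
  · rw [inf_top_eq] at h
    refine h.trans (Submodule.span_le.2 ?_)
    rintro x ⟨hxB, hxX⟩
    have h3 : (e (e.symm ⟨x, hxB⟩) : E) = x := by simp
    have h4 : e.symm ⟨x, hxB⟩ ∈ Finset.univ.filter fun i => (e i : E) ∈ X := by
      simpa using hxX
    refine (le_iSup₂_of_le (f := fun i (_ : i ∈ Finset.univ.filter fun i => (e i : E) ∈ X) =>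
      Submodule.span K {(e i : E)}) _ h4 le_rfl) ?_
    rw [h3]
    exact Submodule.mem_span_singleton_self x
  · refine iSup₂_le fun i hi => ?_
    rw [Submodule.span_singleton_le_iff_mem]
    simpa using hi

/-- Given two flags `{0} ⊊ F₁ ⊊ ⋯ ⊊ F_m = E` and `{0} ⊊ F'₁ ⊊ ⋯ ⊊ F'_{m'} = E`, there is a
frame `L = (L₁, …, L_r)` for `E` (`r = dim E`) such that every `F j` and every `F' j` is a
sum of some of the `L i`. -/
theorem stmt5 (K E : Type*) [Field K] [AddCommGroup E] [Module K E] [FiniteDimensional K E]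
    (m m' : ℕ) (hm : 0 < m) (hm' : 0 < m')
    (F : Fin m → Submodule K E) (F' : Fin m' → Submodule K E)
    (hF : StrictMono F) (hF' : StrictMono F')
    (hFbot : ⊥ < F ⟨0, hm⟩) (hFtop : F ⟨m - 1, by omega⟩ = ⊤)
    (hF'bot : ⊥ < F' ⟨0, hm'⟩) (hF'top : F' ⟨m' - 1, by omega⟩ = ⊤) :
    ∃ L : Fin (Module.finrank K E) → Submodule K E, IsFrame K L ∧
      (∀ j : Fin m, ∃ s : Finset (Fin (Module.finrank K E)), F j = ⨆ i ∈ s, L i) ∧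
      (∀ j : Fin m', ∃ s : Finset (Fin (Module.finrank K E)), F' j = ⨆ i ∈ s, L i) := by
  obtain ⟨B, -, hB, h1, h2⟩ := aux_main F F' hF.monotone hF'.monotone ⟨_, hF'top⟩ ⊤
  have hspan : Submodule.span K B = ⊤ := by
    have := h2 ⟨m' - 1, by omega⟩
    rw [hF'top] at this
    simpa using this
  have hB' : LinearIndependent K ((↑) : B → E) := hB
  let b : Module.Basis B K E := Module.Basis.mk hB' (by simp [hspan])
  have : Fintype B := FiniteDimensional.fintypeBasisIndex b
  have hc : Fintype.card B = Module.finrank K E := (Module.finrank_eq_card_basis b).symm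
  let e : Fin (Module.finrank K E) ≃ B := (Fintype.equivFinOfCardEq hc).symm
  refine ⟨fun i => Submodule.span K {(e i : E)}, ⟨fun i => ?_, ?_, ?_⟩,
    fun j => aux_adapt e _ (h1 j), fun j => aux_adapt e _ (h2 j)⟩
  · exact finrank_span_singleton (hB'.ne_zero (e i))
  · exact (hB'.comp e e.injective).iSupIndep_span_singleton
  · obtain ⟨s, hs⟩ := aux_adapt e (⊤ : Submodule K E) (by simp [hspan])
    rw [eq_top_iff, hs]
    exact iSup₂_le fun i _ => le_iSup (fun i => Submodule.span K {(e i : E)}) i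
end

section
/- Every valuation on E is adapted to some frame: for every valuation v : E → ℝ ∪ {∞} there exists a frame L = (L₁, …, L_r) for E such that every subspace E_{v≥a}, a ∈ ℝ, is a sum of some of the L_i (equivalently, v(e) = min{v(e_i) : e_i ≠ 0} for every e ≠ 0, where e = Σᵢ e_i with e_i ∈ L_i). -/
theorem chain_basis {K E : Type*} [Field K] [AddCommGroup E] [Module K E] [FiniteDimensional K E]
    (S : ℝ → Submodule K E) (hS : Antitone S) (W : Submodule K E) :
    ∃ B : Set E, LinearIndepOn K id B ∧ Submodule.span K B = W ∧
      ∀ t, S t ≤ W → S t ≤ Submodule.span K (B ∩ (S t : Set E)) := by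
  induction W using WellFoundedLT.induction with
  | ind W ih =>
  obtain ⟨B, hB, hBW, h⟩ : ∃ B : Set E, LinearIndepOn K id B ∧ B ⊆ (W : Set E) ∧
      ∀ t, S t < W → S t ≤ Submodule.span K (B ∩ (S t : Set E)) := by
    by_cases hne : {U | U < W ∧ ∃ t, S t = U}.Nonempty
    · obtain ⟨U, ⟨hUW, u, rfl⟩, hmax⟩ := 
        WellFounded.has_min (wellFounded_gt (α := Submodule K E)) _ hne
      obtain ⟨B, hB, hspan, h⟩ := ih _ hUW
      refine ⟨B, hB, ?_, fun t ht => h t ?_⟩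
      · exact (Submodule.subset_span.trans (hspan.le)).trans hUW.le
      · rcases le_total u t with h1 | h1
        · exact hS h1
        · have h2 := hS h1
          by_contra h3
          exact hmax (S t) ⟨ht, t, rfl⟩ (lt_of_le_not_ge h2 h3)
    · refine ⟨∅, linearIndepOn_empty K id, Set.empty_subset _, fun t ht => ?_⟩
      exact absurd ⟨S t, ht, t, rfl⟩ hne
  obtain ⟨B', hB'W, hBB', hWB', hli⟩ := exists_linearIndepOn_id_extension hB hBW
  have hsp : Submodule.span K B' = W := le_antisymm (Submodule.span_le.2 hB'W) hWB'
  refine ⟨B', hli, hsp, fun t ht => ?_⟩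
  rcases ht.lt_or_eq with h1 | h1
  · exact (h t h1).trans (Submodule.span_mono (Set.inter_subset_inter_left _ hBB'))
  · rw [h1, Set.inter_eq_left.2 hB'W, hsp]

/-- Every valuation on a finite-dimensional vector space `E` is adapted to some frame. -/
theorem stmt6 (K E : Type*) [Field K] [AddCommGroup E] [Module K E] [FiniteDimensional K E]
    (v : E → WithTop ℝ) (hv : IsVSValuation K v) :
    ∃ L : Fin (Module.finrank K E) → Submodule K E, IsFrame K L ∧ IsAdapted v L := by
  classical
  obtain ⟨h1, h2, h3⟩ := hv
  have h0 : v 0 = ⊤ := (h3 0).2 rfl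
  let S : ℝ → Submodule K E := fun t =>
    { carrier := {e | (t : WithTop ℝ) ≤ v e}
      add_mem' := fun {a b} ha hb => (le_min ha hb).trans (h2 a b)
      zero_mem' := by simp [h0]
      smul_mem' := fun c x hx => by
        by_cases hc : c = 0
        · simp [hc, h0]
        · simpa [h1 c x hc] using hx }
  have hS : Antitone S := fun a b hab x hx => 
    le_trans (WithTop.coe_le_coe.2 hab) hx
  obtain ⟨B, hB, hsp, h⟩ := chain_basis S hS ⊤
  let b0 : Module.Basis B K E := Module.Basis.mk (v := ((↑) : B → E)) hB (by simp [hsp])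
  have : Fintype B := FiniteDimensional.fintypeBasisIndex b0
  let e : B ≃ Fin (Module.finrank K E) := 
    Fintype.equivFinOfCardEq (Module.finrank_eq_card_basis b0).symm
  let b := b0.reindex e
  have hb : ∀ x : B, b (e x) = x := fun x => by
    rw [Module.Basis.reindex_apply, Equiv.symm_apply_apply]
    exact Module.Basis.mk_apply _ _ x
  refine ⟨fun i => Submodule.span K {b i}, ⟨fun i => finrank_span_singleton (b.ne_zero i),
    b.linearIndependent.iSupIndep_span_singleton, ?_⟩, fun t => 
    ⟨Finset.univ.filter fun i => b i ∈ S t, ?_⟩⟩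
  · rw [← Submodule.span_range_eq_iSup, b.span_eq]
  · change ((S t : Submodule K E) : Set E) = _
    congr 1
    apply le_antisymm
    · refine (h t le_top).trans (Submodule.span_le.2 ?_)
      rintro x ⟨hx, hxt⟩
      have hx' := hb ⟨x, hx⟩
      refine Submodule.mem_iSup_of_mem (e ⟨x, hx⟩) (Submodule.mem_iSup_of_mem ?_ ?_)
      · simpa [hx'] using hxt
      · beta_reduce; rw [hx']; exact Submodule.mem_span_singleton_self _
    · refine iSup₂_le fun i hi => ?_
      rw [Submodule.span_singleton_le_iff_mem]
      exact (Finset.mem_filter.1 hi).2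
end

section
/- Any two valuations on E are adapted to a common frame: for any valuations v, w : E → ℝ ∪ {∞} there exists a single frame L = (L₁, …, L_r) for E such that both v and w are adapted to L. -/
/-- The subspace where `v` is at least `t`. -/
def geSub {K E : Type*} [Field K] [AddCommGroup E] [Module K E]
    {v : E → WithTop ℝ} (hv : IsVSValuation K v) (t : WithTop ℝ) : Submodule K E where
  carrier := {e | t ≤ v e}
  zero_mem' := by
    have : v 0 = ⊤ := (hv.2.2 0).2 rfl
    simp [this]
  add_mem' := by
    intro a b ha hb
    exact le_trans (le_min ha hb) (hv.2.1 a b)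
  smul_mem' := by
    intro c x hx
    by_cases hc : c = 0
    · subst hc
      have : v 0 = ⊤ := (hv.2.2 0).2 rfl
      simp [this]
    · change t ≤ v (c • x)
      rw [hv.1 c x hc]; exact hx

lemma mem_geSub {K E : Type*} [Field K] [AddCommGroup E] [Module K E]
    {v : E → WithTop ℝ} (hv : IsVSValuation K v) (t : WithTop ℝ) (e : E) :
    e ∈ geSub hv t ↔ t ≤ v e := Iff.rfl

lemma exists_max_val {K E : Type*} [Field K] [AddCommGroup E] [Module K E] [FiniteDimensional K E]
    {v : E → WithTop ℝ} (hv : IsVSValuation K v) (A : Set E) (hA : A.Nonempty) :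
    ∃ e ∈ A, ∀ x ∈ A, v x ≤ v e := by
  obtain ⟨e, he, hmin⟩ := WellFounded.has_min
    (InvImage.wf (fun x : E => geSub hv (v x)) (wellFounded_lt (α := Submodule K E))) A hA
  refine ⟨e, he, fun x hx => ?_⟩
  by_contra hlt
  push Not at hlt
  refine hmin x hx ?_
  refine SetLike.lt_iff_le_and_exists.2 ⟨fun y hy => ?_, e, ?_, ?_⟩
  · exact le_trans hlt.le hy
  · exact le_refl (v e)
  · exact not_le.2 hlt

lemma exists_min_val {K E : Type*} [Field K] [AddCommGroup E] [Module K E] [FiniteDimensional K E]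
    {v : E → WithTop ℝ} (hv : IsVSValuation K v) (A : Set E) (hA : A.Nonempty) :
    ∃ e ∈ A, ∀ x ∈ A, v e ≤ v x := by
  obtain ⟨e, he, hmin⟩ := WellFounded.has_min
    (InvImage.wf (fun x : E => geSub hv (v x)) (wellFounded_gt (α := Submodule K E))) A hA
  refine ⟨e, he, fun x hx => ?_⟩
  by_contra hlt
  push Not at hlt
  refine hmin x hx ?_
  refine SetLike.lt_iff_le_and_exists.2 ⟨fun y hy => ?_, x, ?_, ?_⟩
  · exact le_trans hlt.le hy
  · exact le_refl (v x)
  · exact not_le.2 hlt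

lemma step_adapted {K E : Type*} [Field K] [AddCommGroup E] [Module K E]
    {v : E → WithTop ℝ} (hv : IsVSValuation K v) (H : Submodule K E) (e : E)
    (he : ∀ h ∈ H, v (e + h) ≤ v e) {n : ℕ} (b : Fin n → E)
    (hb : ∀ t : WithTop ℝ, ∀ x ∈ H, t ≤ v x → x ∈ Submodule.span K (b '' {i | t ≤ v (b i)}))
    (t : WithTop ℝ) (c : K) (h : E) (hh : h ∈ H) (ht : t ≤ v (c • e + h)) :
    c • e + h ∈ Submodule.span K
      ((Fin.cons e b : Fin (n+1) → E) '' {i | t ≤ v ((Fin.cons e b : Fin (n+1) → E) i)}) := by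
  have key : (c = 0 ∨ t ≤ v e) ∧ t ≤ v h := by
    by_cases hc : c = 0
    · subst hc
      simpa using ht
    · have h1 : t ≤ v e := by
        have h2 := he (c⁻¹ • h) (H.smul_mem _ hh)
        have h3 : c • e + h = c • (e + c⁻¹ • h) := by
          rw [smul_add, smul_smul, mul_inv_cancel₀ hc, one_smul]
        rw [h3, hv.1 _ _ hc] at ht
        exact ht.trans h2
      refine ⟨Or.inr h1, ?_⟩
      have h4 : h ∈ geSub hv t := by
        have h5 : c • e ∈ geSub hv t := Submodule.smul_mem _ _ h1
        exact (Submodule.add_mem_iff_right _ h5).1 ht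
      exact h4
  refine Submodule.add_mem _ ?_ ?_
  · rcases key.1 with hc | h1
    · simp [hc]
    · exact Submodule.smul_mem _ _ (Submodule.subset_span ⟨0, by simpa using h1, by simp⟩)
  · refine Submodule.span_mono ?_ (hb t h hh key.2)
    rintro _ ⟨i, hi, rfl⟩
    exact ⟨i.succ, by simpa using hi, by simp⟩

lemma main_exists {K E : Type*} [Field K] [AddCommGroup E] [Module K E] [FiniteDimensional K E]
    {v w : E → WithTop ℝ} (hv : IsVSValuation K v) (hw : IsVSValuation K w) (U : Submodule K E) :
    ∃ (n : ℕ) (b : Fin n → E), LinearIndependent K b ∧ Submodule.span K (Set.range b) = U ∧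
      (∀ t : WithTop ℝ, ∀ x ∈ U, t ≤ v x → x ∈ Submodule.span K (b '' {i | t ≤ v (b i)})) ∧
      (∀ t : WithTop ℝ, ∀ x ∈ U, t ≤ w x → x ∈ Submodule.span K (b '' {i | t ≤ w (b i)})) := by
  induction U using WellFoundedLT.induction with
  | ind U ih =>
  by_cases hU : U = ⊥
  · subst hU
    refine ⟨0, Fin.elim0, linearIndependent_empty_type, by simp, ?_, ?_⟩ <;>
    · intro t x hx _
      rw [(Submodule.mem_bot K).1 hx]
      exact Submodule.zero_mem _
  · obtain ⟨e0, he0, hmin⟩ := exists_min_val hv (U : Set E) ⟨0, U.zero_mem⟩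
    have hS : ∃ f : E →ₗ[K] K, (∃ x ∈ U, f x ≠ 0) ∧ ∀ x ∈ U, f x ≠ 0 → v x = v e0 := by
      -- subspace of larger valuation
      have hne : v e0 ≠ ⊤ := by
        intro h
        apply hU
        rw [Submodule.eq_bot_iff]
        intro x hx
        exact (hv.2.2 x).1 (top_le_iff.1 (h ▸ hmin x hx))
      by_cases hG : ({x | x ∈ U ∧ v e0 < v x} : Set E).Nonempty
      · obtain ⟨g, ⟨hgU, hg⟩, hgmin⟩ := exists_min_val hv _ hG
        have hnot : e0 ∉ geSub hv (v g) := not_le.2 hg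
        obtain ⟨f, hf, hle⟩ := Submodule.exists_le_ker_of_notMem hnot
        refine ⟨f, ⟨e0, he0, hf⟩, fun x hx hfx => ?_⟩
        by_contra hxe
        have h1 : v e0 < v x := lt_of_le_of_ne (hmin x hx) (Ne.symm hxe)
        exact hfx (hle (hgmin x ⟨hx, h1⟩))
      · exact absurd ⟨0, U.zero_mem, by
          rw [(hv.2.2 0).2 rfl]; exact lt_top_iff_ne_top.2 hne⟩ hG
    obtain ⟨f, ⟨x0, hx0, hfx0⟩, hf⟩ := hS
    obtain ⟨e, ⟨heU, hfe⟩, hmax⟩ := exists_max_val hw {x | x ∈ U ∧ f x ≠ 0} ⟨x0, hx0, hfx0⟩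
    have heH : e ∉ U ⊓ LinearMap.ker f := fun h => hfe h.2
    have hlt : U ⊓ LinearMap.ker f < U :=
      SetLike.lt_iff_le_and_exists.2 ⟨inf_le_left, e, heU, heH⟩
    obtain ⟨n, b, hli, hsp, hbv, hbw⟩ := ih _ hlt
    have hadd : ∀ h ∈ U ⊓ LinearMap.ker f, e + h ∈ U ∧ f (e + h) ≠ 0 := by
      intro h hh
      refine ⟨U.add_mem heU hh.1, ?_⟩
      have : f h = 0 := hh.2
      rwa [map_add, this, add_zero]
    have hdec : ∀ x ∈ U, ∃ c : K, ∃ h ∈ U ⊓ LinearMap.ker f, c • e + h = x := by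
      intro x hx
      refine ⟨f x / f e, x - (f x / f e) • e, ⟨U.sub_mem hx (U.smul_mem _ heU), ?_⟩, by abel⟩
      simp [LinearMap.mem_ker, hfe]
    refine ⟨n + 1, Fin.cons e b, ?_, ?_, ?_, ?_⟩
    · rw [linearIndependent_finCons]
      exact ⟨hli, by rwa [hsp]⟩
    · rw [Fin.range_cons, Submodule.span_insert, hsp]
      apply le_antisymm
      · exact sup_le ((Submodule.span_singleton_le_iff_mem _ _).2 heU) inf_le_left
      · intro x hx
        obtain ⟨c, h, hh, rfl⟩ := hdec x hx
        exact Submodule.add_mem_sup (Submodule.smul_mem _ _ (Submodule.mem_span_singleton_self e)) hh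
    · intro t x hx ht
      obtain ⟨c, h, hh, rfl⟩ := hdec x hx
      refine step_adapted hv _ e (fun h hh => ?_) b hbv t c h hh ht
      rw [hf _ (hadd h hh).1 (hadd h hh).2, hf _ heU hfe]
    · intro t x hx ht
      obtain ⟨c, h, hh, rfl⟩ := hdec x hx
      exact step_adapted hw _ e (fun h hh => hmax _ (hadd h hh)) b hbw t c h hh ht

lemma adapted_of {K E : Type*} [Field K] [AddCommGroup E] [Module K E]
    {v : E → WithTop ℝ} (hv : IsVSValuation K v) {n : ℕ} (b : Fin n → E)
    (hb : ∀ t : WithTop ℝ, ∀ x ∈ (⊤ : Submodule K E), t ≤ v x →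
      x ∈ Submodule.span K (b '' {i | t ≤ v (b i)})) :
    IsAdapted v (fun i => Submodule.span K {b i}) := by
  classical
  intro t
  refine ⟨Finset.univ.filter (fun i => (t : WithTop ℝ) ≤ v (b i)), ?_⟩
  have h1 : (⨆ i ∈ Finset.univ.filter (fun i => (t : WithTop ℝ) ≤ v (b i)),
      Submodule.span K {b i}) = geSub hv t := by
    apply le_antisymm
    · refine iSup₂_le fun i hi => ?_
      rw [Submodule.span_singleton_le_iff_mem]
      exact (Finset.mem_filter.1 hi).2
    · intro x hx
      refine (Submodule.span_le.2 ?_) (hb t x trivial hx)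
      rintro _ ⟨i, hi, rfl⟩
      have hi' : i ∈ Finset.univ.filter (fun i => (t : WithTop ℝ) ≤ v (b i)) :=
        Finset.mem_filter.2 ⟨Finset.mem_univ _, hi⟩
      exact (le_iSup₂ (f := fun i (_ : i ∈ Finset.univ.filter
        (fun i => (t : WithTop ℝ) ≤ v (b i))) => Submodule.span K {b i}) i hi')
        (Submodule.mem_span_singleton_self _)
  rw [h1]
  rfl

/-- Any two valuations on a finite-dimensional vector space `E` are adapted to a common frame. -/
theorem stmt7 (K E : Type*) [Field K] [AddCommGroup E] [Module K E] [FiniteDimensional K E]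
    (v w : E → WithTop ℝ) (hv : IsVSValuation K v) (hw : IsVSValuation K w) :
    ∃ L : Fin (Module.finrank K E) → Submodule K E, IsFrame K L ∧ IsAdapted v L ∧ IsAdapted w L := by
  obtain ⟨n, b, hli, hsp, hbv, hbw⟩ := main_exists hv hw (⊤ : Submodule K E)
  have hn : Module.finrank K E = n := by
    rw [Module.finrank_eq_card_basis (Module.Basis.mk hli hsp.ge), Fintype.card_fin]
  rw [hn]
  refine ⟨fun i => Submodule.span K {b i}, ⟨fun i => finrank_span_singleton (hli.ne_zero i),
    hli.iSupIndep_span_singleton, ?_⟩, adapted_of hv b hbv, adapted_of hw b hbw⟩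
  rw [← Submodule.span_range_eq_iSup, hsp]
end

section
/- Let L = (L₁, …, L_r) and L' = (L'₁, …, L'_r) be two frames for E. Then there exists a permutation π of {1, …, r} such that for every subspace V of E that is adapted to both frames (i.e., V is a sum of some of the L_i and also a sum of some of the L'_j), one has V = Σ_{i : L_i ⊆ V} L'_{π(i)}. In particular, the simplicial isomorphism between the two apartments induced by L_i ↦ L'_{π(i)} fixes every flag adapted to both L and L'. -/
theorem IsFrame.exists_basis {K E : Type*} [Field K] [AddCommGroup E] [Module K E]
    {r : ℕ} {L : Fin r → Submodule K E} (hL : IsFrame K L) :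
    ∃ b : Module.Basis (Fin r) K E, ∀ i, L i = Submodule.span K {b i} := by
  obtain ⟨h1, h2, h3⟩ := hL
  have : ∀ i, ∃ v : E, v ≠ 0 ∧ L i = Submodule.span K {v} := by
    intro i
    obtain ⟨v, hv, hs⟩ := finrank_eq_one_iff'.mp (h1 i)
    refine ⟨v, by simpa using hv, le_antisymm ?_ ?_⟩
    · intro w hw
      obtain ⟨c, hc⟩ := hs ⟨w, hw⟩
      exact Submodule.mem_span_singleton.mpr ⟨c, congrArg Subtype.val hc⟩
    · rw [Submodule.span_singleton_le_iff_mem]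
      exact v.2
  choose v hv hs using this
  have hli : LinearIndependent K v :=
    h2.linearIndependent L (fun i => by rw [hs i]; exact Submodule.mem_span_singleton_self _) hv
  refine ⟨Module.Basis.mk hli ?_, fun i => by rw [Module.Basis.mk_apply]; exact hs i⟩
  rw [← h3]
  refine iSup_le fun i => ?_
  rw [hs i]
  exact Submodule.span_mono (by simp)

theorem biSup_span_basis {K E : Type*} [Field K] [AddCommGroup E] [Module K E]
    {r : ℕ} {L : Fin r → Submodule K E} (b : Module.Basis (Fin r) K E)
    (hb : ∀ i, L i = Submodule.span K {b i}) (s : Finset (Fin r)) :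
    (⨆ i ∈ s, L i) = Submodule.span K (b '' (s : Set (Fin r))) := by
  rw [← Set.biUnion_of_singleton (b '' (s : Set (Fin r))), Set.biUnion_image]
  simp [Submodule.span_iUnion, hb]

theorem finrank_biSup_basis {K E : Type*} [Field K] [AddCommGroup E] [Module K E]
    {r : ℕ} {L : Fin r → Submodule K E} (b : Module.Basis (Fin r) K E)
    (hb : ∀ i, L i = Submodule.span K {b i}) (s : Finset (Fin r)) :
    Module.finrank K (⨆ i ∈ s, L i : Submodule K E) = s.card := by
  classical
  rw [biSup_span_basis b hb s]
  have h := finrank_span_eq_card (R := K) (b := fun i : s => b i)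
    (b.linearIndependent.comp _ Subtype.val_injective)
  rw [Fintype.card_coe] at h
  rw [← h, Set.image_eq_range]
  rfl

/-- Given two frames `L`, `L'` for `E`, there is a permutation `π` of `{1, …, r}` such that
every subspace `V` adapted to both frames satisfies `V = Σ_{i : Lᵢ ⊆ V} L'_{π i}`; hence the
simplicial isomorphism `Lᵢ ↦ L'_{π i}` between the two apartments fixes every flag adapted
to both frames. -/
theorem stmt8 (K E : Type*) [Field K] [AddCommGroup E] [Module K E] [FiniteDimensional K E]
    (r : ℕ) (L L' : Fin r → Submodule K E)
    (hL : IsFrame K L) (hL' : IsFrame K L') :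
    ∃ π : Equiv.Perm (Fin r),
      ∀ V : Submodule K E,
        (∃ s : Finset (Fin r), V = ⨆ i ∈ s, L i) →
        (∃ s : Finset (Fin r), V = ⨆ i ∈ s, L' i) →
        V = ⨆ i ∈ {i : Fin r | L i ≤ V}, L' (π i) := by
  obtain ⟨b, hb⟩ := hL.exists_basis
  obtain ⟨b', hb'⟩ := hL'.exists_basis
  have hdet : (b'.toMatrix b).det ≠ 0 := by
    have := b'.invertibleToMatrix b
    exact (Matrix.isUnit_det_of_invertible (b'.toMatrix b)).ne_zero
  rw [Matrix.det_apply] at hdet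
  obtain ⟨π, -, hπ⟩ := Finset.exists_ne_zero_of_sum_ne_zero hdet
  have hπ' : ∀ i, b'.repr (b i) (π i) ≠ 0 := by
    intro i h0
    apply hπ
    rw [Finset.prod_eq_zero (Finset.mem_univ i) (by rw [Module.Basis.toMatrix_apply]; exact h0),
      smul_zero]
  refine ⟨π, ?_⟩
  rintro V ⟨s, hs⟩ ⟨t, ht⟩
  have hmem : ∀ i, L i ≤ V → π i ∈ t := by
    intro i hi
    rw [hb i, Submodule.span_singleton_le_iff_mem, ht, biSup_span_basis b' hb' t,
      Module.Basis.mem_span_image] at hi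
    exact_mod_cast hi (by simpa using hπ' i)
  have hsV : ∀ i ∈ s, L i ≤ V := fun i hi => by
    rw [hs]; exact le_biSup L hi
  have hcard : s.card = t.card := by
    rw [← finrank_biSup_basis b hb s, ← finrank_biSup_basis b' hb' t, ← hs, ← ht]
  have himg : s.image π = t := by
    apply Finset.eq_of_subset_of_card_le
    · intro j hj
      obtain ⟨i, hi, rfl⟩ := Finset.mem_image.mp hj
      exact hmem i (hsV i hi)
    · rw [Finset.card_image_of_injective _ π.injective, hcard]
  apply le_antisymm
  · conv_lhs => rw [ht]
    refine iSup₂_le fun j hj => ?_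
    rw [← himg] at hj
    obtain ⟨i, hi, rfl⟩ := Finset.mem_image.mp hj
    exact le_iSup₂_of_le (f := fun i (_ : i ∈ {i : Fin r | L i ≤ V}) => L' (π i))
      i (hsV i hi) le_rfl
  · refine iSup₂_le fun i hi => ?_
    have h := hmem i hi
    rw [ht]
    exact le_biSup L' h
end

section
/- Let L = (L₁, …, L_r) and L' = (L'₁, …, L'_r) be two frames for E. Then there exists a permutation π of {1, …, r} such that the induced identification of adapted valuations fixes every valuation adapted to both frames: for every a = (a₁, …, a_r) ∈ ℝ^r, if the valuation v_{L,a} is also adapted to L' (i.e., v_{L,a} = v_{L',b} for some b ∈ ℝ^r), then v_{L,a} = v_{L',a∘π⁻¹}, where (a∘π⁻¹)_j = a_{π⁻¹(j)}. -/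
open scoped Classical

/-- `v` is the function `v_{L,a}`: it sends `0` to `∞` and a nonzero `e = Σᵢ eᵢ`
(`eᵢ ∈ Lᵢ`) to `min {aᵢ : eᵢ ≠ 0}`. -/
def IsMinValFun {K E : Type*} [Field K] [AddCommGroup E] [Module K E]
    {r : ℕ} (L : Fin r → Submodule K E) (a : Fin r → ℝ) (v : E → WithTop ℝ) : Prop :=
  v 0 = ⊤ ∧
  ∀ c : Fin r → E, (∀ i, c i ∈ L i) → (∑ i, c i) ≠ 0 →
    v (∑ i, c i) =
      (Finset.univ.filter fun i => c i ≠ 0).inf fun i => ((a i : ℝ) : WithTop ℝ)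

theorem frame_basis {K E : Type*} [Field K] [AddCommGroup E] [Module K E]
    {r : ℕ} {L : Fin r → Submodule K E} (hL : IsFrame K L) :
    ∃ B : Module.Basis (Fin r) K E, ∀ i, B i ∈ L i := by
  obtain ⟨h1, h2, h3⟩ := hL
  have hx : ∀ i, ∃ x : E, x ∈ L i ∧ x ≠ 0 ∧ ∀ w ∈ L i, ∃ c : K, c • x = w := by
    intro i
    obtain ⟨x, hx0, hx⟩ := finrank_eq_one_iff'.mp (h1 i)
    refine ⟨x, x.2, by simpa using hx0, fun w hw => ?_⟩
    obtain ⟨c, hc⟩ := hx ⟨w, hw⟩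
    exact ⟨c, by simpa using congrArg Subtype.val hc⟩
  choose x hxm hx0 hxs using hx
  have hli : LinearIndependent K x := h2.linearIndependent L hxm hx0
  have hsp : ⊤ ≤ Submodule.span K (Set.range x) := by
    rw [← h3]
    refine iSup_le fun i w hw => ?_
    obtain ⟨c, rfl⟩ := hxs i w hw
    exact Submodule.smul_mem _ _ (Submodule.subset_span ⟨i, rfl⟩)
  exact ⟨Module.Basis.mk hli hsp, fun i => by simpa using hxm i⟩

theorem minval_le {K E : Type*} [Field K] [AddCommGroup E] [Module K E]
    {r : ℕ} {L : Fin r → Submodule K E} (B : Module.Basis (Fin r) K E) (hB : ∀ i, B i ∈ L i)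
    {a : Fin r → ℝ} {v : E → WithTop ℝ} (hv : IsMinValFun L a v) (e : E) (i : Fin r)
    (hi : B.repr e i ≠ 0) : v e ≤ (a i : WithTop ℝ) := by
  have he : e ≠ 0 := by
    rintro rfl
    simp at hi
  have h := hv.2 (fun i => B.repr e i • B i) (fun i => Submodule.smul_mem _ _ (hB i))
    (by rw [B.sum_repr]; exact he)
  rw [B.sum_repr] at h
  rw [h]
  apply Finset.inf_le (f := fun i => ((a i : ℝ) : WithTop ℝ))
  simp [hi, B.ne_zero i]

theorem le_minval {K E : Type*} [Field K] [AddCommGroup E] [Module K E]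
    {r : ℕ} {L : Fin r → Submodule K E} (B : Module.Basis (Fin r) K E) (hB : ∀ i, B i ∈ L i)
    {a : Fin r → ℝ} {v : E → WithTop ℝ} (hv : IsMinValFun L a v) (i : Fin r) :
    (a i : WithTop ℝ) ≤ v (B i) := by
  have hs : ∑ k, (if k = i then B i else 0) = B i := by simp
  have h := hv.2 (fun k => if k = i then B i else 0)
    (fun k => by
      by_cases hk : k = i
      · subst hk; simpa using hB k
      · simp [hk]) (by rw [hs]; exact B.ne_zero i)
  rw [hs] at h
  rw [h]
  apply Finset.le_inf
  intro k hk
  have : k = i := by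
    by_contra hne
    simp [hne] at hk
  rw [this]

theorem exists_perm_repr {K E : Type*} [Field K] [AddCommGroup E] [Module K E]
    {r : ℕ} (B B' : Module.Basis (Fin r) K E) :
    ∃ π : Equiv.Perm (Fin r), ∀ i, B'.repr (B i) (π i) ≠ 0 := by
  have hd : (B'.toMatrix B).det ≠ 0 := by
    intro h0
    have h := congrArg Matrix.det (B'.toMatrix_mul_toMatrix_flip B)
    rw [Matrix.det_mul, h0] at h
    simp at h
  rw [Matrix.det_apply] at hd
  obtain ⟨π, -, hπ⟩ := Finset.exists_ne_zero_of_sum_ne_zero hd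
  refine ⟨π, fun i h0 => hπ ?_⟩
  rw [Finset.prod_eq_zero (Finset.mem_univ i) (by simpa [Module.Basis.toMatrix_apply] using h0),
    smul_zero]

/-- Given two frames `L`, `L'` for `E`, there is a permutation `π` of `{1, …, r}` such that
the induced identification of adapted valuations fixes every valuation adapted to both
frames: for every `a ∈ ℝ^r`, if `v_{L,a}` is also adapted to `L'` (i.e. equals `v_{L',b}`
for some `b`), then `v_{L,a} = v_{L', a ∘ π⁻¹}`. -/
theorem stmt9 (K E : Type*) [Field K] [AddCommGroup E] [Module K E] [FiniteDimensional K E]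
    (r : ℕ) (L L' : Fin r → Submodule K E)
    (hL : IsFrame K L) (hL' : IsFrame K L') :
    ∃ π : Equiv.Perm (Fin r),
      ∀ (a : Fin r → ℝ) (v : E → WithTop ℝ),
        IsMinValFun L a v →
        (∃ b : Fin r → ℝ, IsMinValFun L' b v) →
        IsMinValFun L' (fun j => a (π.symm j)) v := by
  obtain ⟨B, hB⟩ := frame_basis hL
  obtain ⟨B', hB'⟩ := frame_basis hL'
  obtain ⟨π, hπ⟩ := exists_perm_repr B B'
  obtain ⟨σ, hσ⟩ := exists_perm_repr B' B
  refine ⟨π, ?_⟩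
  rintro a v ha ⟨b, hb⟩
  have h1 : ∀ i, a i ≤ b (π i) := fun i =>
    WithTop.coe_le_coe.mp ((le_minval B hB ha i).trans (minval_le B' hB' hb _ _ (hπ i)))
  have h2 : ∀ j, b j ≤ a (σ j) := fun j =>
    WithTop.coe_le_coe.mp ((le_minval B' hB' hb j).trans (minval_le B hB ha _ _ (hσ j)))
  have h3 : ∑ i, b (π i) ≤ ∑ i, a i := by
    rw [Equiv.sum_comp π b, ← Equiv.sum_comp σ a]
    exact Finset.sum_le_sum fun j _ => h2 j
  have h4 := (Finset.sum_eq_sum_iff_of_le (fun i (_ : i ∈ Finset.univ) => h1 i)).mp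
    (le_antisymm (Finset.sum_le_sum fun i _ => h1 i) h3)
  have h5 : (fun j => a (π.symm j)) = b := by
    funext j
    rw [h4 _ (Finset.mem_univ _), Equiv.apply_symm_apply]
  rw [h5]
  exact hb
end

section
/- Let π : E → Γ be a finite semilattice valuation, i.e., there is a finite subset Γ₀ ⊆ Γ containing the image of π and closed under the meet operation ∧. Then for every γ ∈ Γ there exists γ' ∈ Γ₀ such that E_{≥γ} = E_{≥γ'}; consequently, the collection of subspaces {E_{≥γ} : γ ∈ Γ} is a finite set. -/
/-- Let `π : E → Γ` be a semilattice valuation on `E` with values in a meet-semilattice `Γ`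
with maximum element `⊤`, and suppose `π` is finite: there is a finite subset `Γ₀ ⊆ Γ`
containing the image of `π` and closed under meets.  Then for every `γ ∈ Γ` there is
`γ' ∈ Γ₀` with `E_{≥γ} = E_{≥γ'}`; consequently `{E_{≥γ} : γ ∈ Γ}` is a finite collection. -/
theorem stmt11 (K E Γ : Type*) [Field K] [AddCommGroup E] [Module K E]
    [SemilatticeInf Γ] [OrderTop Γ]
    (π : E → Γ)
    (hsc : ∀ (c : K) (e : E), c ≠ 0 → π (c • e) = π e)
    (hadd : ∀ e₁ e₂ : E, π e₁ ⊓ π e₂ ≤ π (e₁ + e₂))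
    (htop : ∀ e : E, π e = ⊤ ↔ e = 0)
    (Γ₀ : Set Γ) (hfin : Γ₀.Finite) (him : Set.range π ⊆ Γ₀)
    (hmeet : ∀ x ∈ Γ₀, ∀ y ∈ Γ₀, x ⊓ y ∈ Γ₀) :
    (∀ γ : Γ, ∃ γ' ∈ Γ₀, {e : E | γ ≤ π e} = {e : E | γ' ≤ π e}) ∧
    {S : Set E | ∃ γ : Γ, S = {e : E | γ ≤ π e}}.Finite := by
  have h1 : ∀ γ : Γ, ∃ γ' ∈ Γ₀, {e : E | γ ≤ π e} = {e : E | γ' ≤ π e} := by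
    classical
    intro γ
    have ht : (⊤ : Γ) ∈ Γ₀ := him ⟨0, (htop 0).2 rfl⟩
    refine ⟨(hfin.toFinset.filter (fun x => γ ≤ x)).inf id, ?_, ?_⟩
    · refine Finset.inf_mem Γ₀ ht hmeet _ _ ?_
      intro x hx
      simpa using (hfin.mem_toFinset.1 (Finset.mem_filter.1 hx).1)
    · ext e
      constructor
      · intro he
        exact Finset.inf_le (f := id)
          (Finset.mem_filter.2 ⟨hfin.mem_toFinset.2 (him ⟨e, rfl⟩), he⟩)
      · intro he
        exact le_trans (Finset.le_inf fun x hx => (Finset.mem_filter.1 hx).2) he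
  refine ⟨h1, (hfin.image fun γ => {e : E | γ ≤ π e}).subset ?_⟩
  rintro S ⟨γ, rfl⟩
  obtain ⟨γ', h, h'⟩ := h1 γ
  exact ⟨γ', h, h'.symm⟩
end
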